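/- Let k ⊆ K ⊆ L be a tower of fields with [L:K] = [K:k] = 2 and L/k separable, and suppose K is the unique field strictly between k and L. Then for every β ∈ Kˣ there exists a finite separable field extension F/k such that (i) the image β ⊗ 1 of β in (K ⊗_k F)ˣ is a norm from (L ⊗_k F)ˣ, and (ii) for every finite separable field extension F'/k such that the image of β in (K ⊗_k F')ˣ is a norm from (L ⊗_k F')ˣ, the degree [F:k] divides [F':k]. -/

import Mathlib

open TensorProduct

/-- `β ∈ Kˣ` becomes a norm from `(L ⊗[k] F)ˣ` to `(K ⊗[k] F)ˣ`, where `L ⊗[k] F` is a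
`(K ⊗[k] F)`-algebra via the map induced by the inclusion `K ⊆ L`. -/
def IsNormFrom (k K L F : Type) [Field k] [Field K] [Field L] [Field F]
    [Algebra k K] [Algebra k L] [Algebra K L] [IsScalarTower k K L] [Algebra k F]
    (β : K) : Prop :=
  letI : Algebra (K ⊗[k] F) (L ⊗[k] F) :=
    ((Algebra.TensorProduct.map (IsScalarTower.toAlgHom k K L) (AlgHom.id k F)).toRingHom).toAlgebra
  ∃ x : (L ⊗[k] F)ˣ,
    Algebra.norm (K ⊗[k] F) (x : L ⊗[k] F) = (β : K) ⊗ₜ[k] (1 : F)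


/-
Write `K = k[ω]` with `ω² = ω - m` and `L = K[ω']` with `ω'² = ω' - n`. By Springer's theorem on
quadratic forms, `β` becomes a norm in odd degree only if it is a norm already. Otherwise an Albert
form in six variables over `k`, attached to the quaternion algebra `(n, β)` over `K`, decides
between the degrees `2` and `4`. If it is isotropic, a nontrivial zero is an element of the
quaternion algebra with reduced trace and norm in `k`, and its quadratic equation over `k` defines
an `F` of degree `2`. If it is anisotropic, passing to the fixed field of a Sylow `2`-subgroup and
applying Springer's theorem again shows that every degree is divisible by `4`, while the
coordinates over `k` of a root of `X² - X + n` generate an extension of degree at most `4` in which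
every `β` is a norm.
-/

section Springer

open Polynomial Matrix

/-- The value at `x : ι → R` of the quadratic form with coefficient matrix `A` over `k`, for a
`k`-algebra `R`. A matrix, rather than a `QuadraticForm`, is used because the base change of
quadratic forms in Mathlib requires `2` to be invertible. -/
def quadValue {k R ι : Type*} [CommRing k] [CommRing R] [Algebra k R] [Fintype ι]
    (A : Matrix ι ι k) (x : ι → R) : R :=
  x ⬝ᵥ A.map (algebraMap k R) *ᵥ x

/-- The quadratic form with coefficient matrix `A` has no nontrivial zero with coordinates
in `R`. -/
def AnisotropicOver {k ι : Type*} [CommRing k] [Fintype ι] (A : Matrix ι ι k) (R : Type*)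
    [CommRing R] [Algebra k R] : Prop :=
  ∀ x : ι → R, quadValue A x = 0 → x = 0

section CommRing

variable {k R S ι : Type*} [CommRing k] [CommRing R] [CommRing S] [Algebra k R] [Algebra k S]
  [Fintype ι] (A : Matrix ι ι k)

lemma quadValue_eq_sum (x : ι → R) :
    quadValue A x = ∑ i, ∑ j, algebraMap k R (A i j) * (x i * x j) := by
  simp only [quadValue, dotProduct, Matrix.mulVec, Matrix.map_apply, Finset.mul_sum]
  exact Finset.sum_congr rfl fun i _ => Finset.sum_congr rfl fun j _ => by ring

lemma map_quadValue (φ : R →ₐ[k] S) (x : ι → R) : φ (quadValue A x) = quadValue A (φ ∘ x) := by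
  simp [quadValue_eq_sum]

lemma quadValue_smul (c : R) (x : ι → R) : quadValue A (c • x) = c ^ 2 * quadValue A x := by
  simp only [quadValue, Matrix.mulVec_smul, smul_dotProduct, dotProduct_smul, smul_eq_mul]
  ring

variable {A} in
lemma AnisotropicOver.of_injective (h : AnisotropicOver A S) (φ : R →ₐ[k] S)
    (hφ : Function.Injective φ) : AnisotropicOver A R := fun x hx =>
  funext fun i => hφ <| by
    simpa using congrFun (h (φ ∘ x) (by rw [← map_quadValue, hx, map_zero])) i

lemma AnisotropicOver.tower {M : Type*} [CommRing M] [Algebra k M] [Algebra M R]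
    [IsScalarTower k M R] :
    AnisotropicOver (A.map (algebraMap k M)) R ↔ AnisotropicOver A R := by
  simp only [AnisotropicOver, quadValue, Matrix.map_map, ← RingHom.coe_comp,
    ← IsScalarTower.algebraMap_eq]

end CommRing

variable {k ι : Type*} [Field k] [Fintype ι] {A : Matrix ι ι k}

lemma natDegree_quadValue_le (A : Matrix ι ι k) {f : ι → k[X]} {D : ℕ}
    (hf : ∀ i, (f i).natDegree ≤ D) : (quadValue A f).natDegree ≤ D + D := by
  rw [quadValue_eq_sum]
  refine natDegree_sum_le_of_forall_le _ _ fun i _ =>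
    natDegree_sum_le_of_forall_le _ _ fun j _ => ?_
  exact (natDegree_C_mul_le _ _).trans (natDegree_mul_le_of_le (hf i) (hf j))

lemma coeff_quadValue (A : Matrix ι ι k) {f : ι → k[X]} {D : ℕ}
    (hf : ∀ i, (f i).natDegree ≤ D) :
    (quadValue A f).coeff (D + D) = quadValue A fun i => (f i).coeff D := by
  simp only [quadValue_eq_sum, finsetSum_coeff, Polynomial.algebraMap_apply, coeff_C_mul,
    coeff_mul_add_eq_of_natDegree_le (hf _) (hf _), Algebra.algebraMap_self_apply]

lemma natDegree_quadValue (hA : AnisotropicOver A k) (f : ι → k[X]) :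
    (quadValue A f).natDegree = 2 * Finset.univ.sup fun i => (f i).natDegree := by
  set D := Finset.univ.sup fun i => (f i).natDegree with hD
  have hfD : ∀ i, (f i).natDegree ≤ D := fun i =>
    Finset.le_sup (f := fun i => (f i).natDegree) (Finset.mem_univ i)
  rw [two_mul]
  refine le_antisymm (natDegree_quadValue_le A hfD) ?_
  obtain h0 | hpos := D.eq_zero_or_pos
  · simp [h0]
  · obtain ⟨i, -, hi⟩ : ∃ i ∈ Finset.univ, D ≤ (f i).natDegree :=
      (Finset.le_sup_iff hpos).1 hD.le
    have hlead : (f i).coeff D ≠ 0 := by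
      rw [← le_antisymm (hfD i) hi, coeff_natDegree, leadingCoeff_ne_zero]
      rintro h
      simp [h] at hi
      omega
    refine le_natDegree_of_ne_zero fun h => hlead ?_
    rw [coeff_quadValue A hfD] at h
    exact congrFun (hA _ h) i

lemma AnisotropicOver.polynomial (hA : AnisotropicOver A k) : AnisotropicOver A k[X] := by
  intro f hf
  have hdeg : ∀ i, (f i).natDegree ≤ 0 := by
    have h := natDegree_quadValue hA f
    rw [hf, natDegree_zero, eq_comm, mul_eq_zero, or_iff_right two_ne_zero] at h
    exact fun i => h ▸ Finset.le_sup (f := fun i => (f i).natDegree) (Finset.mem_univ i)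
  have hcoeff : (fun i => (f i).coeff 0) = 0 := hA _ <| by
    rw [← coeff_quadValue A hdeg, hf, coeff_zero]
  funext i
  rw [eq_C_of_natDegree_le_zero (hdeg i), congrFun hcoeff i, Pi.zero_apply, C_0, Pi.zero_apply]

lemma exists_irreducible_odd_natDegree_dvd (h : k[X]) (hodd : Odd h.natDegree) :
    ∃ r : k[X], Irreducible r ∧ Odd r.natDegree ∧ r ∣ h := by
  induction h using WfDvdMonoid.induction_on_irreducible with
  | zero => simp at hodd
  | unit u hu => simp [natDegree_eq_zero_of_isUnit hu] at hodd
  | mul g r hg hr ih =>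
    by_cases hr_odd : Odd r.natDegree
    · exact ⟨r, hr, hr_odd, dvd_mul_right _ _⟩
    · rw [natDegree_mul hr.ne_zero hg] at hodd
      obtain ⟨q, hq, hq_odd, hqg⟩ := ih (by grind)
      exact ⟨q, hq, hq_odd, hqg.mul_left r⟩

/- Reduce `f` modulo `p` and divide by the greatest common divisor. -/
lemma exists_primitive_of_not_dvd {ι : Type*} [Finite ι] {p : k[X]} (hp : p.natDegree ≠ 0)
    {f : ι → k[X]} {i₀ : ι} (hf : ¬p ∣ f i₀) :
    ∃ (G : k[X]) (g : ι → k[X]), ¬p ∣ G ∧ (∀ i, p ∣ f i - G * g i) ∧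
      (∀ i, (g i).natDegree < p.natDegree) ∧ ∀ r, (∀ i, r ∣ g i) → IsUnit r := by
  classical
  cases nonempty_fintype ι
  let _ : NormalizedGCDMonoid k[X] := UniqueFactorizationMonoid.toNormalizedGCDMonoid _
  obtain ⟨g, hg, hg_gcd⟩ :=
    Finset.extract_gcd (fun i => f i % p) (s := Finset.univ) ⟨i₀, Finset.mem_univ _⟩
  set G := Finset.univ.gcd fun i => f i % p
  have hsub : ∀ i, p ∣ f i - G * g i := fun i => by
    rw [← hg i (Finset.mem_univ i), EuclideanDomain.mod_eq_sub_mul_div, sub_sub_cancel]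
    exact dvd_mul_right _ _
  have hpG : ¬p ∣ G := fun h => hf <| (dvd_sub_left (h.mul_right _)).1 (hsub i₀)
  refine ⟨G, g, hpG, hsub, fun i => ?_, fun r hr => ?_⟩
  · have hG : G ≠ 0 := fun h => hpG (h ▸ dvd_zero p)
    refine lt_of_le_of_lt ?_ (natDegree_mod_lt (f i) hp)
    rw [hg i (Finset.mem_univ i)]
    by_cases hgi : g i = 0
    · simp [hgi]
    · exact natDegree_le_of_dvd (dvd_mul_left _ _) (mul_ne_zero hG hgi)
  · exact isUnit_of_dvd_one (hg_gcd ▸ Finset.dvd_gcd fun i _ => hr i)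

lemma dvd_quadValue_of_dvd_sub (A : Matrix ι ι k) {p : k[X]} {f g : ι → k[X]}
    (hfg : ∀ i, p ∣ f i - g i) (hf : p ∣ quadValue A f) : p ∣ quadValue A g := by
  have hcomp : Ideal.Quotient.mkₐ k (Ideal.span {p}) ∘ f
      = Ideal.Quotient.mkₐ k (Ideal.span {p}) ∘ g := funext fun i => by
    simpa [Ideal.Quotient.mk_eq_mk_iff_sub_mem, Ideal.mem_span_singleton] using hfg i
  rw [← Ideal.mem_span_singleton, ← Ideal.Quotient.eq_zero_iff_mem] at hf ⊢
  rw [← Ideal.Quotient.mkₐ_eq_mk k, map_quadValue] at hf ⊢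
  rw [← hcomp, hf]

/- The cofactor of `p` in the value of a reduced primitive vector has odd degree smaller than that
of `p`, so one of its irreducible factors contradicts minimality. -/
lemma AnisotropicOver.dvd_of_dvd_quadValue (hA : AnisotropicOver A k) (p : k[X])
    (hp : Irreducible p) (hodd : Odd p.natDegree) (f : ι → k[X]) (hpf : p ∣ quadValue A f) (i : ι) :
    p ∣ f i := by
  induction hn : p.natDegree using Nat.strong_induction_on generalizing p f i with
  | _ n ih =>
    by_contra hfi
    obtain ⟨G, g, hpG, hsub, hdeg, hprim⟩ := exists_primitive_of_not_dvd hp.natDegree_pos.ne' hfi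
    have hpg : p ∣ quadValue A g := by
      have h : p ∣ quadValue A (G • g) := dvd_quadValue_of_dvd_sub A hsub hpf
      rw [quadValue_smul] at h
      exact (hp.prime.dvd_or_dvd h).resolve_left fun h => hpG (hp.prime.dvd_of_dvd_pow h)
    have hg : quadValue A g ≠ 0 := fun h =>
      not_isUnit_zero (hprim 0 fun i => by simp [hA.polynomial g h])
    obtain ⟨h, hh⟩ := hpg
    have hh0 : h ≠ 0 := right_ne_zero_of_mul (hh ▸ hg)
    have hsum : p.natDegree + h.natDegree = 2 * Finset.univ.sup fun i => (g i).natDegree := by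
      rw [← natDegree_mul hp.ne_zero hh0, ← hh, natDegree_quadValue hA]
    have hsup : (Finset.univ.sup fun i => (g i).natDegree) < p.natDegree :=
      (Finset.sup_lt_iff hp.natDegree_pos).2 fun i _ => hdeg i
    obtain ⟨r, hr, hr_odd, hrh⟩ := exists_irreducible_odd_natDegree_dvd h (by grind)
    have hlt : r.natDegree < n := (natDegree_le_of_dvd hrh hh0).trans_lt (by omega)
    exact hr.not_isUnit <| hprim r fun i =>
      ih _ hlt r hr hr_odd g (hh ▸ hrh.mul_left p) i rfl

lemma AnisotropicOver.adjoin_simple {M : Type*} [Field M] [Algebra k M] {α : M}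
    (hα : IsIntegral k α) (hodd : Odd (Module.finrank k (IntermediateField.adjoin k {α})))
    (hA : AnisotropicOver A k) : AnisotropicOver A (IntermediateField.adjoin k {α}) := by
  intro x hx
  have hmem : ∀ i, ∃ f : k[X], aeval α f = x i := fun i => by
    have h := (x i).2
    rwa [← IntermediateField.mem_toSubalgebra,
      IntermediateField.adjoin_simple_toSubalgebra_of_isAlgebraic hα.isAlgebraic,
      Algebra.adjoin_singleton_eq_range_aeval] at h
  choose f hf using hmem
  rw [IntermediateField.adjoin.finrank hα] at hodd
  have hdvd : minpoly k α ∣ quadValue A f := by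
    rw [minpoly.dvd_iff, map_quadValue]
    have hfx : aeval α ∘ f = IntermediateField.val _ ∘ x := funext hf
    rw [hfx, ← map_quadValue, hx, map_zero]
  funext i
  ext
  rw [← hf i]
  exact (minpoly.dvd_iff).1
    (hA.dvd_of_dvd_quadValue _ (minpoly.irreducible hα) hodd f hdvd i)

/-- **Springer's theorem** on quadratic forms. -/
theorem AnisotropicOver.of_odd_finrank {M : Type*} [Field M] [Algebra k M]
    (hodd : Odd (Module.finrank k M)) (hA : AnisotropicOver A k) : AnisotropicOver A M := by
  have : FiniteDimensional k M := .of_finrank_pos hodd.pos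
  suffices h : ∀ E : IntermediateField k M, Odd (Module.finrank k E) → AnisotropicOver A E from
    (h ⊤ (by rwa [IntermediateField.finrank_top'])).of_injective
      IntermediateField.topEquiv.symm.toAlgHom IntermediateField.topEquiv.symm.injective
  intro E
  induction E using IntermediateField.induction_on_adjoin with
  | base =>
    exact fun _ => hA.of_injective (IntermediateField.botEquiv k M).toAlgHom
      (IntermediateField.botEquiv k M).injective
  | ih E x ihE =>
    intro hE
    have hmul : Module.finrank k E * Module.finrank E (IntermediateField.adjoin E {x}) =
      Module.finrank k ((IntermediateField.adjoin E {x}).restrictScalars k) :=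
        Module.finrank_mul_finrank k E (IntermediateField.adjoin E {x})
    rw [← hmul, Nat.odd_mul] at hE
    have hEx : AnisotropicOver (A.map (algebraMap k E)) E :=
      (AnisotropicOver.tower A).2 (ihE hE.1)
    have hEx' : AnisotropicOver A (IntermediateField.adjoin E {x}) :=
      (AnisotropicOver.tower A).1 (hEx.adjoin_simple (.of_finite E x) hE.2)
    exact hEx'

end Springer

section QuadRing

open scoped QuadraticAlgebra

/-- The quadratic algebra `R[ω]` with `ω² = ω - n`. Every separable quadratic field extension has
this form, in every characteristic, and `R[ω]` is étale over `R` exactly when its discriminant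
`1 - 4 * n` is a unit. -/
abbrev QuadRing (R : Type*) [CommRing R] (n : R) := QuadraticAlgebra R (-n) 1

/-- The base change `R[ω] → S[ω]` along a ring homomorphism `R → S`. -/
@[simps]
def QuadRing.map {R S : Type*} [CommRing R] [CommRing S] (φ : R →+* S) (n : R) :
    QuadRing R n →+* QuadRing S (φ n) where
  toFun z := ⟨φ z.re, φ z.im⟩
  map_zero' := by ext <;> simp
  map_one' := by ext <;> simp
  map_add' z z' := by ext <;> simp
  map_mul' z z' := by ext <;> simp

/-- `β` is a norm from the quadratic algebra `R[ω]`, `ω² = ω - n`; equivalently, for a unit `β`, the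
quaternion algebra `R[ω] ⊕ R[ω]j` with `j² = β` is split. -/
def IsQuadNorm {R : Type*} [CommRing R] (n β : R) : Prop :=
  ∃ z : QuadRing R n, z.norm = β

section CommRing

variable {R S : Type*} [CommRing R] [CommRing S] {n β : R}

lemma QuadRing.norm_eq (z : QuadRing R n) :
    z.norm = z.re ^ 2 + z.re * z.im + n * z.im ^ 2 := by
  rw [QuadraticAlgebra.norm_def]
  ring

lemma QuadRing.norm_map (φ : R →+* S) (z : QuadRing R n) :
    (QuadRing.map φ n z).norm = φ z.norm := by
  simp [QuadRing.norm_eq]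

lemma IsQuadNorm.map (φ : R →+* S) : IsQuadNorm n β → IsQuadNorm (φ n) (φ β) := by
  rintro ⟨z, rfl⟩
  exact ⟨QuadRing.map φ n z, QuadRing.norm_map φ z⟩

lemma isQuadNorm_map_iff (φ : R ≃+* S) : IsQuadNorm (φ n) (φ β) ↔ IsQuadNorm n β :=
  ⟨fun h => by simpa using h.map φ.symm.toRingHom, .map φ.toRingHom⟩

/- Over `R` the algebra `R[ω]` is then isomorphic to `R × R`, with the product as its norm. -/
lemma isQuadNorm_of_root (hn : IsUnit (1 - 4 * n)) {r : R} (hr : r ^ 2 = r - n) (β : R) :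
    IsQuadNorm n β := by
  have hδ : (2 * r - 1) ^ 2 = 1 - 4 * n := by linear_combination 4 * hr
  obtain ⟨d, hd⟩ := ((isUnit_pow_iff two_ne_zero).1 (hδ ▸ hn)).exists_right_inv
  refine ⟨⟨β - (β - 1) * d * r, (β - 1) * d⟩, ?_⟩
  rw [QuadRing.norm_eq]
  linear_combination (β - 1) ^ 2 * d ^ 2 * hr - β * (β - 1) * hd

end CommRing

section Field

variable {F : Type*} [Field F] {n β : F}

lemma isQuadNorm_of_norm_eq_zero (hn : 1 - 4 * n ≠ 0) {z : QuadRing F n} (hz : z ≠ 0)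
    (hnorm : z.norm = 0) (β : F) : IsQuadNorm n β := by
  rw [QuadRing.norm_eq] at hnorm
  have him : z.im ≠ 0 := fun h => hz (by ext <;> simp_all)
  refine isQuadNorm_of_root hn.isUnit (r := -z.re / z.im) ?_ β
  field_simp
  linear_combination hnorm

/- Springer's theorem applies to the form `N(a + bω) - β c²`. -/
theorem IsQuadNorm.of_odd_finrank {M : Type*} [Field M] [Algebra F M]
    (hodd : Odd (Module.finrank F M)) (hn : 1 - 4 * n ≠ 0)
    (h : IsQuadNorm (algebraMap F M n) (algebraMap F M β)) : IsQuadNorm n β := by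
  by_contra hβ
  have haniso : AnisotropicOver !![1, 1, 0; 0, n, 0; 0, 0, -β] F := fun x hx => by
    have hx' : x 0 ^ 2 + x 0 * x 1 + n * x 1 ^ 2 = β * x 2 ^ 2 := by
      simp [quadValue_eq_sum, Fin.sum_univ_succ] at hx
      linear_combination hx
    have h2 : x 2 = 0 := by
      by_contra h2
      refine hβ ⟨⟨x 0 / x 2, x 1 / x 2⟩, ?_⟩
      rw [QuadRing.norm_eq]
      field_simp
      linear_combination hx'
    by_contra hx0
    refine hβ (isQuadNorm_of_norm_eq_zero hn (z := ⟨x 0, x 1⟩) (fun h => hx0 ?_) ?_ β)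
    · rw [QuadraticAlgebra.ext_iff] at h
      funext i
      fin_cases i
      exacts [h.1, h.2, h2]
    · rw [QuadRing.norm_eq, hx', h2]
      ring
  obtain ⟨z, hz⟩ := h
  have hzero : ![z.re, z.im, 1] = 0 := haniso.of_odd_finrank hodd _ <| by
    rw [QuadRing.norm_eq] at hz
    simp [quadValue_eq_sum, Fin.sum_univ_succ]
    linear_combination hz
  exact one_ne_zero (congrFun hzero 2)

end Field

section Separable

variable {k K : Type*} [Field k] [Field K] [Algebra k K]

open Polynomial in
lemma exists_sq_eq_sub_of_natDegree_minpoly {x : K} (hsep : IsSeparable k x)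
    (hx : (minpoly k x).natDegree = 2) :
    ∃ (w : K) (m : k), w ∉ (algebraMap k K).range ∧ w ^ 2 = w - algebraMap k K m := by
  have hxk : x ∉ (algebraMap k K).range := fun h => by
    simpa [hx] using minpoly.natDegree_eq_one_iff.2 h
  obtain ⟨b, c, hbc⟩ := isMonicOfDegree_two_iff.1 ⟨hx, minpoly.monic hsep.isIntegral⟩
  have hroot : x ^ 2 + algebraMap k K b * x + algebraMap k K c = 0 := by
    simpa [hbc] using minpoly.aeval k x
  obtain hb | rfl := ne_or_eq b 0
  · have hb' : algebraMap k K b ≠ 0 := by simpa using hb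
    refine ⟨-x / algebraMap k K b, c / b ^ 2, fun h => hxk ?_, ?_⟩
    · have hmem := mul_mem h ⟨-b, rfl⟩
      rwa [map_neg, div_mul_eq_mul_div, neg_mul_neg, mul_div_cancel_right₀ _ hb'] at hmem
    · simp only [map_div₀, map_pow]
      field_simp
      linear_combination hroot
  · have h2 : (2 : k) ≠ 0 := fun h2 => by
      have hder : derivative (minpoly k x) = 0 := by
        simp [hbc, one_add_one_eq_two, h2]
      rw [IsSeparable, separable_def, hder, isCoprime_zero_right] at hsep
      exact minpoly.not_isUnit k x hsep
    have h2' : (2 : K) ≠ 0 := by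
      rw [← map_ofNat (algebraMap k K) 2]
      exact (_root_.map_ne_zero _).2 h2
    refine ⟨x + algebraMap k K 2⁻¹, c + 4⁻¹, fun h => hxk ?_, ?_⟩
    · simpa using sub_mem h ⟨2⁻¹, rfl⟩
    · have h4 : (4 : K) = 2 * 2 := by norm_num
      simp only [map_add, map_inv₀, map_ofNat, map_zero, zero_mul, add_zero] at hroot ⊢
      rw [h4]
      field_simp
      linear_combination 4 * hroot

lemma not_mem_range_iff_linearIndependent (w : K) :
    w ∉ (algebraMap k K).range ↔ LinearIndependent k ![1, w] := by
  rw [LinearIndependent.pair_iff' one_ne_zero]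
  simp [Algebra.algebraMap_eq_smul_one]

lemma nonempty_quadRing_algEquiv (hKk : Module.finrank k K = 2) {w : K} {m : k}
    (hw : w ∉ (algebraMap k K).range) (hwm : w ^ 2 = w - algebraMap k K m) :
    Nonempty (QuadRing k m ≃ₐ[k] K) := by
  have hw' : w * w = (-m) • (1 : K) + (1 : k) • w := by
    rw [← sq, hwm, Algebra.smul_def, Algebra.smul_def, map_neg, map_one]
    ring
  let φ : QuadRing k m →ₐ[k] K := QuadraticAlgebra.lift ⟨w, hw'⟩
  have hφ : Function.Injective φ := by
    refine (injective_iff_map_eq_zero φ).2 fun z hz => ?_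
    rw [QuadraticAlgebra.ext_iff]
    exact LinearIndependent.pair_iff.1 ((not_mem_range_iff_linearIndependent w).1 hw) _ _ hz
  have : FiniteDimensional k K := .of_finrank_pos (by omega)
  refine ⟨.ofBijective φ ⟨hφ, ?_⟩⟩
  exact (LinearMap.injective_iff_surjective_of_finrank_eq_finrank
    (f := φ.toLinearMap) (by rw [QuadraticAlgebra.finrank_eq_two, hKk])).1 hφ

theorem exists_quadRing_algEquiv [Algebra.IsSeparable k K] (hKk : Module.finrank k K = 2) :
    ∃ m : k, Nonempty (QuadRing k m ≃ₐ[k] K) := by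
  have : FiniteDimensional k K := .of_finrank_pos (by omega)
  obtain ⟨x, hx⟩ : ∃ x : K, x ∉ (algebraMap k K).range := by
    by_contra! h
    have hbot : (⊥ : Subalgebra k K) = ⊤ := (Algebra.surjective_algebraMap_iff.1 h).symm
    rw [Subalgebra.bot_eq_top_iff_finrank_eq_one, hKk] at hbot
    omega
  have hdeg : (minpoly k x).natDegree = 2 := by
    refine le_antisymm (hKk ▸ minpoly.natDegree_le x) ?_
    exact (minpoly.two_le_natDegree_iff (.of_finite k x)).2 hx
  obtain ⟨w, m, hw, hwm⟩ :=
    exists_sq_eq_sub_of_natDegree_minpoly (Algebra.IsSeparable.isSeparable k x) hdeg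
  exact ⟨m, nonempty_quadRing_algEquiv hKk hw hwm⟩

lemma one_sub_four_mul_ne_zero_of_algEquiv {m : k} (e : QuadRing k m ≃ₐ[k] K) :
    1 - 4 * m ≠ 0 := by
  intro hm
  have hsq : (⟨-1, 2⟩ : QuadRing k m) * ⟨-1, 2⟩ = 0 := by
    ext
    · simp only [QuadraticAlgebra.re_mul, QuadraticAlgebra.re_zero]
      linear_combination hm
    · simp only [QuadraticAlgebra.im_mul, QuadraticAlgebra.im_zero]
      ring
  have h : (⟨-1, 2⟩ : QuadRing k m) = 0 := by
    rw [← map_eq_zero_iff e e.injective, ← mul_self_eq_zero, ← map_mul, hsq, map_zero]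
  simp [QuadraticAlgebra.ext_iff] at h

lemma sq_ne_of_algEquiv {m : k} (e : QuadRing k m ≃ₐ[k] K) (r : k) : r ^ 2 ≠ -m + 1 * r := by
  intro hr
  have hmul : (⟨-r, 1⟩ : QuadRing k m) * ⟨r - 1, 1⟩ = 0 := by
    ext
    · simp only [QuadraticAlgebra.re_mul, QuadraticAlgebra.re_zero]
      linear_combination -hr
    · simp only [QuadraticAlgebra.im_mul, QuadraticAlgebra.im_zero]
      ring
  have h : e ⟨-r, 1⟩ = 0 ∨ e ⟨r - 1, 1⟩ = 0 := by
    rw [← mul_eq_zero, ← map_mul, hmul, map_zero]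
  simp [map_eq_zero_iff e e.injective, QuadraticAlgebra.ext_iff] at h

end Separable

end QuadRing

section NormFrom

open scoped QuadraticAlgebra

theorem exists_quadRing_algEquiv_of_isPushout {R A B S : Type*} [CommRing R] [CommRing A]
    [CommRing B] [CommRing S] [Algebra R A] [Algebra R B] [Algebra R S] [Algebra A S] [Algebra B S]
    [IsScalarTower R A S] [IsScalarTower R B S] [h : Algebra.IsPushout R A B S] {n : R}
    (e : QuadRing R n ≃ₐ[R] B) :
    ∃ ψ : QuadRing A (algebraMap R A n) ≃ₐ[A] S,
      ∀ z, ψ (QuadRing.map (algebraMap R A) n z) = algebraMap B S (e z) := by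
  let u : S := algebraMap B S (e ω)
  have hu : u * u = (-algebraMap R A n) • (1 : S) + (1 : A) • u := by
    rw [← map_mul, ← map_mul, QuadraticAlgebra.omega_mul_omega_eq_add]
    simp [u, Algebra.smul_def, ← IsScalarTower.algebraMap_apply]
  let g : QuadRing A (algebraMap R A n) →ₐ[A] S := QuadraticAlgebra.lift ⟨u, hu⟩
  have hg (z : QuadRing R n) : g (QuadRing.map (algebraMap R A) n z) = algebraMap B S (e z) := by
    obtain ⟨x, y⟩ := z
    rw [QuadraticAlgebra.mk_eq_add_smul_omega x y]
    simp [g, u, Algebra.smul_def, ← IsScalarTower.algebraMap_apply]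
  let b : Module.Basis (Fin 2) R (QuadRing R n) := QuadraticAlgebra.basis _ _
  let bA : Module.Basis (Fin 2) A (QuadRing A (algebraMap R A n)) := QuadraticAlgebra.basis _ _
  let bS : Module.Basis (Fin 2) A S := h.out.basis (b.map e.toLinearEquiv)
  have hbasis : g.toLinearMap = (bA.equiv bS (Equiv.refl _)).toLinearMap := bA.ext fun i => by
    have hi : bA i = QuadRing.map (algebraMap R A) n (b i) := by
      fin_cases i <;> ext <;> simp [b, bA, QuadraticAlgebra.basis]
    rw [AlgHom.toLinearMap_apply, hi, hg, ← hi]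
    simp [bS, IsBaseChange.basis_apply]
  refine ⟨.ofBijective g ?_, hg⟩
  rw [← AlgHom.coe_toLinearMap, hbasis]
  exact (bA.equiv bS (Equiv.refl _)).bijective

lemma exists_unit_norm_eq_iff_isQuadNorm {A S : Type*} [CommRing A] [CommRing S] [Algebra A S]
    {n β : A} (e : QuadRing A n ≃ₐ[A] S) (hβ : IsUnit β) :
    (∃ x : Sˣ, Algebra.norm A (x : S) = β) ↔ IsQuadNorm n β := by
  have hnorm (z : QuadRing A n) : Algebra.norm A (e z) = z.norm := by
    rw [Algebra.norm_eq_of_algEquiv, Algebra.norm_apply]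
    exact QuadraticAlgebra.det_toLinearMap_eq_norm z
  constructor
  · rintro ⟨x, rfl⟩
    exact ⟨e.symm x, by rw [← hnorm, e.apply_symm_apply]⟩
  · rintro ⟨z, rfl⟩
    exact ⟨((QuadraticAlgebra.isUnit_iff_norm_isUnit.2 hβ).map e).unit, hnorm z⟩

variable {k K L : Type} [Field k] [Field K] [Field L] [Algebra k K] [Algebra k L] [Algebra K L]
  [IsScalarTower k K L]

lemma isNormFrom_iff_isQuadNorm_tmul {n β : K} (e : QuadRing K n ≃ₐ[K] L) (hβ : β ≠ 0) (F : Type)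
    [Field F] [Algebra k F] :
    IsNormFrom k K L F β ↔ IsQuadNorm (n ⊗ₜ[k] (1 : F)) (β ⊗ₜ[k] (1 : F)) := by
  let : Algebra (K ⊗[k] F) (L ⊗[k] F) :=
    (Algebra.TensorProduct.map (IsScalarTower.toAlgHom k K L) (AlgHom.id k F)).toRingHom.toAlgebra
  have : IsScalarTower K (K ⊗[k] F) (L ⊗[k] F) := .of_algebraMap_eq fun x => by
    simp [RingHom.algebraMap_toAlgebra]
  have : Algebra.IsPushout K L (K ⊗[k] F) (L ⊗[k] F) :=
    .tensorProduct_tensorProduct k F K L (by ext; simp [RingHom.algebraMap_toAlgebra])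
  have : Algebra.IsPushout K (K ⊗[k] F) L (L ⊗[k] F) := .symm inferInstance
  obtain ⟨ψ, -⟩ := exists_quadRing_algEquiv_of_isPushout (A := K ⊗[k] F) (S := L ⊗[k] F) e
  exact exists_unit_norm_eq_iff_isQuadNorm ψ
    (hβ.isUnit.map Algebra.TensorProduct.includeLeftRingHom)

/-- For `n` and `β` in the quadratic algebra `k[ω]`, `ω² = ω - m`: the element `β` becomes a norm
from the quadratic algebra over `k[ω]` defined by `n` after the base change from `k` to `R`. -/
def IsNormOver {k : Type*} [CommRing k] {m : k} (n β : QuadRing k m) (R : Type*) [CommRing R]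
    [Algebra k R] : Prop :=
  IsQuadNorm (QuadRing.map (algebraMap k R) m n) (QuadRing.map (algebraMap k R) m β)

attribute [local instance] Algebra.TensorProduct.rightAlgebra in
theorem isNormFrom_iff_isNormOver {m : k} {n β : QuadRing k m} (e : QuadRing k m ≃ₐ[k] K)
    (e' : QuadRing K (e n) ≃ₐ[K] L) (hβ : β ≠ 0) (F : Type) [Field F] [Algebra k F] :
    IsNormFrom k K L F (e β) ↔ IsNormOver n β F := by
  rw [isNormFrom_iff_isQuadNorm_tmul e' (by simpa using hβ)]
  obtain ⟨ψ, hψ⟩ := exists_quadRing_algEquiv_of_isPushout (A := F) (S := K ⊗[k] F) e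
  have hψ' (z : QuadRing k m) : ψ (QuadRing.map (algebraMap k F) m z) = e z ⊗ₜ[k] (1 : F) := by
    rw [hψ, Algebra.TensorProduct.algebraMap_apply, Algebra.algebraMap_self_apply]
  rw [← hψ', ← hψ']
  exact isQuadNorm_map_iff ψ.toRingEquiv

end NormFrom

section NormOver

variable {k : Type*} [Field k] {m : k} {n β : QuadRing k m}

lemma isNormOver_self_iff : IsNormOver n β k ↔ IsQuadNorm n β := Iff.rfl

lemma isNormOver_map_iff {M E : Type*} [CommRing M] [CommRing E] [Algebra k M] [Algebra k E]
    [Algebra M E] [IsScalarTower k M E] :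
    IsNormOver (QuadRing.map (algebraMap k M) m n) (QuadRing.map (algebraMap k M) m β) E ↔
      IsNormOver n β E := by
  rw [IsNormOver, IsNormOver, IsScalarTower.algebraMap_eq k M E]
  rfl

lemma IsNormOver.map {R S : Type*} [CommRing R] [CommRing S] [Algebra k R] [Algebra k S]
    (h : IsNormOver n β R) (φ : R →ₐ[k] S) : IsNormOver n β S := by
  rw [IsNormOver, ← φ.comp_algebraMap]
  exact IsQuadNorm.map (QuadRing.map φ.toRingHom _) h

section OddDegree

variable (M : Type*) [Field M] [Algebra k M]

lemma sq_ne_algebraMap_of_odd_finrank (hm : ∀ r : k, r ^ 2 ≠ -m + 1 * r)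
    (hodd : Odd (Module.finrank k M)) (r : M) : r ^ 2 ≠ -algebraMap k M m + 1 * r := by
  intro hr
  have : FiniteDimensional k M := .of_finrank_pos hodd.pos
  have : Fact (∀ r : k, r ^ 2 ≠ -m + 1 * r) := ⟨hm⟩
  have haniso : AnisotropicOver !![1, 1; 0, m] k := fun x hx => by
    have hz : (⟨x 0, x 1⟩ : QuadRing k m) = 0 := by
      rw [← QuadraticAlgebra.norm_eq_zero_iff_eq_zero, QuadRing.norm_eq, ← hx]
      simp only [quadValue_eq_sum, Fin.sum_univ_two]
      simp
      ring
    rw [QuadraticAlgebra.ext_iff] at hz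
    funext i
    fin_cases i
    exacts [hz.1, hz.2]
  have hzero : ![-r, 1] = 0 := haniso.of_odd_finrank hodd _ <| by
    simp [quadValue_eq_sum]
    linear_combination hr
  exact one_ne_zero (congrFun hzero 1)

theorem IsNormOver.of_odd_finrank (hm : ∀ r : k, r ^ 2 ≠ -m + 1 * r) (hn : 1 - 4 * n ≠ 0)
    (hodd : Odd (Module.finrank k M)) (h : IsNormOver n β M) : IsQuadNorm n β := by
  have : FiniteDimensional k M := .of_finrank_pos hodd.pos
  have : Fact (∀ r : k, r ^ 2 ≠ -m + 1 * r) := ⟨hm⟩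
  have : Fact (∀ r : M, r ^ 2 ≠ -algebraMap k M m + 1 * r) :=
    ⟨sq_ne_algebraMap_of_odd_finrank M hm hodd⟩
  let : Algebra (QuadRing k m) (QuadRing M (algebraMap k M m)) :=
    (QuadRing.map (algebraMap k M) m).toAlgebra
  have : IsScalarTower k (QuadRing k m) (QuadRing M (algebraMap k M m)) :=
    .of_algebraMap_eq fun r => (IsScalarTower.algebraMap_apply k M _ r).trans <| by
      ext <;> simp [RingHom.algebraMap_toAlgebra]
  have : FiniteDimensional k (QuadRing M (algebraMap k M m)) := Module.Finite.trans M _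
  have : FiniteDimensional (QuadRing k m) (QuadRing M (algebraMap k M m)) := .right k _ _
  have hfinrank :
      Module.finrank (QuadRing k m) (QuadRing M (algebraMap k M m)) = Module.finrank k M := by
    have h := Module.finrank_mul_finrank k (QuadRing k m) (QuadRing M (algebraMap k M m))
    rw [← Module.finrank_mul_finrank k M (QuadRing M _), QuadraticAlgebra.finrank_eq_two,
      QuadraticAlgebra.finrank_eq_two] at h
    omega
  exact IsQuadNorm.of_odd_finrank (hfinrank ▸ hodd) hn h

end OddDegree

end NormOver

section Albert

/-- The quadratic form, in the variables `p, s, c₀, d₀, c₁, d₁`, expressing that the reduced norm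
of the element `t + yj` with `t = pω + (s - 2pω)υ` and `y = (c₀ + d₀ω) + (c₁ + d₁ω)υ` of the
quaternion algebra `k[ω][υ] ⊕ k[ω][υ]j`, where `ω² = ω - m`, `υ² = υ - n` and `j² = β`, lies
in `k`. These are, up to addition of a scalar, all the elements with reduced trace in `k`, so that
it is an Albert form of the corestriction from `k[ω]` to `k` of the quaternion algebra. -/
def albertMatrix {k : Type*} [CommRing k] {m : k} (n β : QuadRing k m) : Matrix (Fin 6) (Fin 6) k :=
  let γ := β * n
  let a := 4 * (n.re + n.im)
  !![a - 4 * m * n.im - 1, 1 - a, 0, 0, 0, 0;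
    0, n.im, 0, 0, 0, 0;
    0, 0, -β.im, -2 * (β.re + β.im), -β.im, -(β.re + β.im);
    0, 0, 0, m * β.im - (β.re + β.im), -(β.re + β.im), m * β.im - (β.re + β.im);
    0, 0, 0, 0, -γ.im, -2 * (γ.re + γ.im);
    0, 0, 0, 0, 0, m * γ.im - (γ.re + γ.im)]

lemma map_albertMatrix {k R : Type*} [CommRing k] [CommRing R] (φ : k →+* R) {m : k}
    (n β : QuadRing k m) :
    (albertMatrix n β).map φ = albertMatrix (QuadRing.map φ m n) (QuadRing.map φ m β) := by
  ext i j
  fin_cases i <;> fin_cases j <;> simp [albertMatrix, map_ofNat φ]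

variable {k : Type*} [Field k] {m : k} {n β : QuadRing k m}

lemma quadValue_albertMatrix (p s : k) (y : QuadRing (QuadRing k m) n) :
    quadValue (albertMatrix n β) ![p, s, y.re.re, y.re.im, y.im.re, y.im.im] =
      ((⟨⟨0, p⟩, ⟨s, -2 * p⟩⟩ : QuadRing (QuadRing k m) n).norm - β * y.norm).im := by
  simp [quadValue_eq_sum, Fin.sum_univ_succ, albertMatrix, QuadRing.norm_eq, sq]
  ring

lemma not_anisotropicOver_albertMatrix_iff :
    ¬AnisotropicOver (albertMatrix n β) k ↔
      ∃ (p s : k) (y : QuadRing (QuadRing k m) n), ¬(p = 0 ∧ s = 0 ∧ y = 0) ∧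
        ((⟨⟨0, p⟩, ⟨s, -2 * p⟩⟩ : QuadRing (QuadRing k m) n).norm - β * y.norm).im = 0 := by
  simp only [← quadValue_albertMatrix, AnisotropicOver, not_forall]
  constructor
  · rintro ⟨x, hx, hx0⟩
    refine ⟨x 0, x 1, ⟨⟨x 2, x 3⟩, ⟨x 4, x 5⟩⟩, fun h => hx0 ?_, ?_⟩
    · simp only [QuadraticAlgebra.ext_iff] at h
      ext i
      fin_cases i
      exacts [h.1, h.2.1, h.2.2.1.1, h.2.2.1.2, h.2.2.2.1, h.2.2.2.2]
    · convert hx using 2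
      ext i
      fin_cases i <;> rfl
  · rintro ⟨p, s, y, hne, h⟩
    refine ⟨_, h, fun h0 => hne ?_⟩
    simp only [QuadraticAlgebra.ext_iff]
    exact ⟨congrFun h0 0, congrFun h0 1, ⟨congrFun h0 2, congrFun h0 3⟩,
      congrFun h0 4, congrFun h0 5⟩

/-- The isomorphism of `k[υ][ω]` with `k[ω][υ]`, as a ring homomorphism. -/
def QuadRing.swap {k : Type*} [CommRing k] (m ν : k) :
    QuadRing (QuadRing k ν) (algebraMap k _ m) →+* QuadRing (QuadRing k m) (algebraMap k _ ν) where
  toFun z := ⟨⟨z.re.re, z.im.re⟩, ⟨z.re.im, z.im.im⟩⟩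
  map_zero' := by ext <;> simp
  map_one' := rfl
  map_add' z z' := by ext <;> simp
  map_mul' z z' := by ext <;> simp <;> ring

lemma QuadRing.swap_map {k : Type*} [CommRing k] {m : k} (ν : k) (z : QuadRing k m) :
    QuadRing.swap m ν (QuadRing.map (algebraMap k _) m z) = algebraMap _ _ z := by
  ext <;> simp [QuadRing.swap]

lemma QuadRing.norm_smul {R : Type*} [CommRing R] {n : R} (c : R) (z : QuadRing R n) :
    (c • z).norm = c ^ 2 * z.norm := by
  rw [Algebra.smul_def, map_mul, QuadraticAlgebra.norm_algebraMap]

lemma QuadRing.norm_sub_algebraMap {R : Type*} [CommRing R] {n : R} (z : QuadRing R n) (c : R) :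
    (z - algebraMap R _ c).norm = z.norm - c * z.trace + c ^ 2 := by
  simp only [QuadRing.norm_eq, QuadraticAlgebra.trace_def, QuadraticAlgebra.re_sub,
    QuadraticAlgebra.im_sub, QuadraticAlgebra.algebraMap_re, QuadraticAlgebra.algebraMap_im]
  ring

/- If `z₀ + z₁υ` has norm `β`, with `z₀` and `z₁` over `C`, take `t = z₀ / z₁` and `y = 1 / z₁`. -/
lemma exists_trace_norm_of_isQuadNorm_algebraMap {C : Type*} [Field C] {n β ν : C}
    (hn : 1 - 4 * n ≠ 0) (hβ : ¬IsQuadNorm n β)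
    (h : IsQuadNorm (algebraMap C (QuadRing C ν) n) (algebraMap C (QuadRing C ν) β)) :
    ∃ t y : QuadRing C n, y ≠ 0 ∧ t.trace = -1 ∧ t.norm - β * y.norm = ν := by
  obtain ⟨z, hz⟩ := h
  set z₀ : QuadRing C n := ⟨z.re.re, z.im.re⟩ with hz₀
  set z₁ : QuadRing C n := ⟨z.re.im, z.im.im⟩ with hz₁
  obtain ⟨hre, him⟩ : z₀.norm - ν * z₁.norm = β ∧ (z₀ * star z₁).trace = -z₁.norm := by
    rw [QuadRing.norm_eq, QuadraticAlgebra.ext_iff] at hz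
    simp [sq] at hz
    simp [QuadRing.norm_eq, QuadraticAlgebra.trace_def, hz₀, hz₁]
    constructor
    · linear_combination hz.1
    · linear_combination hz.2
  have hne : z₁ ≠ 0 := fun h1 => hβ ⟨z₀, by
    rw [← hre, h1, QuadraticAlgebra.norm_zero, mul_zero, sub_zero]⟩
  have hnorm : z₁.norm ≠ 0 := fun h1 => hβ (isQuadNorm_of_norm_eq_zero hn hne h1 β)
  refine ⟨z₁.norm⁻¹ • (z₀ * star z₁), z₁.norm⁻¹ • star z₁, ?_, ?_, ?_⟩
  · exact smul_ne_zero (inv_ne_zero hnorm) (star_ne_zero.2 hne)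
  · rw [map_smul, him, smul_eq_mul, mul_neg, inv_mul_cancel₀ hnorm]
  · rw [QuadRing.norm_smul, QuadRing.norm_smul, map_mul, QuadraticAlgebra.norm_star, ← hre]
    field_simp
    ring

lemma not_anisotropicOver_albertMatrix_of_trace {t y : QuadRing (QuadRing k m) n} {c ν : k}
    (hy : y ≠ 0) (htrace : t.trace = algebraMap k _ c)
    (hnorm : t.norm - β * y.norm = algebraMap k _ ν) : ¬AnisotropicOver (albertMatrix n β) k := by
  refine not_anisotropicOver_albertMatrix_iff.2
    ⟨t.re.im, c - 2 * t.re.re, y, fun h => hy h.2.2, ?_⟩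
  have ht : ⟨⟨0, t.re.im⟩, ⟨c - 2 * t.re.re, -2 * t.re.im⟩⟩ =
      t - algebraMap (QuadRing k m) _ (algebraMap k _ t.re.re) := by
    simp only [QuadraticAlgebra.trace_def, QuadraticAlgebra.ext_iff, QuadraticAlgebra.re_add,
      QuadraticAlgebra.im_add, QuadraticAlgebra.re_mul, QuadraticAlgebra.im_mul,
      QuadraticAlgebra.re_ofNat, QuadraticAlgebra.im_ofNat, QuadraticAlgebra.algebraMap_re,
      QuadraticAlgebra.algebraMap_im, one_mul] at htrace
    ext
    · simp
    · simp
    · simp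
      linear_combination -htrace.1
    · simp
      linear_combination -htrace.2
  rw [ht, QuadRing.norm_sub_algebraMap, htrace, sub_add_eq_add_sub, sub_eq_iff_eq_add.1 hnorm,
    ← map_mul, ← map_pow]
  simp only [QuadraticAlgebra.im_add, QuadraticAlgebra.im_sub, QuadraticAlgebra.algebraMap_im,
    zero_add, sub_self, sub_zero, add_zero]

theorem not_anisotropicOver_albertMatrix_of_isNormOver (hm : ∀ r : k, r ^ 2 ≠ -m + 1 * r)
    (hn : 1 - 4 * n ≠ 0) (hβ : ¬IsQuadNorm n β) {ν : k} (h : IsNormOver n β (QuadRing k ν)) :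
    ¬AnisotropicOver (albertMatrix n β) k := by
  have : Fact (∀ r : k, r ^ 2 ≠ -m + 1 * r) := ⟨hm⟩
  have h' := IsQuadNorm.map (QuadRing.swap m ν) h
  rw [QuadRing.swap_map, QuadRing.swap_map] at h'
  obtain ⟨t, y, hy, htrace, hnorm⟩ := exists_trace_norm_of_isQuadNorm_algebraMap hn hβ h'
  refine not_anisotropicOver_albertMatrix_of_trace (c := -1) hy (htrace.trans ?_) hnorm
  rw [map_neg, map_one]

theorem IsNormOver.not_anisotropicOver_albertMatrix (M : Type*) {E : Type*} [Field M] [Field E]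
    [Algebra k M] [Algebra k E] [Algebra M E] [IsScalarTower k M E] [Algebra.IsSeparable M E]
    (hm : ∀ r : k, r ^ 2 ≠ -m + 1 * r) (hn : 1 - 4 * n ≠ 0) (hodd : Odd (Module.finrank k M))
    (hE : Module.finrank M E = 2) (hβ : ¬IsQuadNorm n β) (h : IsNormOver n β E) :
    ¬AnisotropicOver (albertMatrix n β) k := fun haniso => by
  obtain ⟨ν, ⟨e⟩⟩ := exists_quadRing_algEquiv hE
  have hinj : Function.Injective (QuadRing.map (algebraMap k M) m) := fun z z' hz => by
    rw [QuadraticAlgebra.ext_iff] at hz ⊢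
    exact hz.imp (fun h => (algebraMap k M).injective h) fun h => (algebraMap k M).injective h
  refine not_anisotropicOver_albertMatrix_of_isNormOver (ν := ν)
    (sq_ne_algebraMap_of_odd_finrank M hm hodd) ?_
    (fun hM => hβ (IsNormOver.of_odd_finrank M hm hn hodd hM))
    (IsNormOver.map (isNormOver_map_iff.2 h) e.symm.toAlgHom) ?_
  · rw [← map_ofNat (QuadRing.map (algebraMap k M) m) 4, ← map_one (QuadRing.map _ m), ← map_mul,
      ← map_sub]
    exact (map_ne_zero_iff _ hinj).2 hn
  · rw [← map_albertMatrix]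
    exact (AnisotropicOver.tower _).2 (haniso.of_odd_finrank hodd)

end Albert

section Split

section Field

variable {C : Type*} [Field C] {n β : C}

lemma exists_trace_mul_ne_zero (hn : 1 - 4 * n ≠ 0) {y : QuadRing C n} (hy : y ≠ 0) :
    ∃ v : QuadRing C n, (y * v).trace ≠ 0 := by
  by_contra! h
  have h₀ := h ⟨1, 0⟩
  have h₁ := h ⟨0, 1⟩
  simp only [QuadraticAlgebra.trace_def, QuadraticAlgebra.re_mul, mul_one, neg_mul, mul_zero,
    add_zero, QuadraticAlgebra.im_mul, zero_add, one_mul, mul_neg] at h₀ h₁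
  have hre : y.re = 0 := by
    refine (mul_eq_zero.1 ?_).resolve_left hn
    linear_combination (1 - 2 * n) * h₀ - h₁
  refine hy (QuadraticAlgebra.ext hre ?_)
  rw [QuadraticAlgebra.im_zero]
  linear_combination h₀ - 2 * hre

section RingHom

variable {D : Type*} [CommRing D] (φ : C →+* D)

/- The root `(θ - a) / b` of `X² - X + n`, where `t = a + bω`, splits `D[ω]`. -/
lemma isQuadNorm_map_of_im_ne_zero (hn : 1 - 4 * n ≠ 0) {t : QuadRing C n} (ht : t.im ≠ 0)
    (htrace : t.trace = 1) {θ : D} (hθ : θ ^ 2 = θ - φ t.norm) (β : D) : IsQuadNorm (φ n) β := by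
  have hinv : φ t.im⁻¹ * φ t.im = 1 := by rw [← map_mul, inv_mul_cancel₀ ht, map_one]
  have htrace' : 2 * φ t.re + φ t.im = 1 := by
    simpa [QuadraticAlgebra.trace_def, map_ofNat φ] using congrArg φ htrace
  have hunit : IsUnit (1 - 4 * φ n) := by
    simpa [map_ofNat φ] using hn.isUnit.map φ
  refine isQuadNorm_of_root hunit (r := φ t.im⁻¹ * (θ - φ t.re)) ?_ β
  simp only [QuadRing.norm_eq, map_add, map_mul, map_pow] at hθ
  linear_combination φ t.im⁻¹ ^ 2 * hθ - φ t.im⁻¹ ^ 2 * θ * htrace' +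
    (φ t.im⁻¹ * (θ - φ t.re) - φ n * (φ t.im⁻¹ * φ t.im + 1)) * hinv

/- `ν` is chosen so that `θ² = θ - ν` makes `N(t - θ) = β N(y)`. -/
theorem isQuadNorm_map_of_trace_eq_one (hn : 1 - 4 * n ≠ 0) {t y : QuadRing C n}
    (hty : t.im ≠ 0 ∨ y ≠ 0) (htrace : t.trace = 1) {θ : D}
    (hθ : θ ^ 2 = θ - φ (t.norm - β * y.norm)) : IsQuadNorm (φ n) (φ β) := by
  have htrace' : (QuadRing.map φ n t).trace = 1 := by
    simpa [QuadraticAlgebra.trace_def, map_ofNat φ] using congrArg φ htrace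
  have hnorm : (QuadRing.map φ n t - algebraMap D _ θ).norm = φ β * φ y.norm := by
    rw [QuadRing.norm_sub_algebraMap, QuadRing.norm_map, htrace', hθ, map_sub, map_mul]
    ring
  rcases eq_or_ne y 0 with rfl | hy
  · refine isQuadNorm_map_of_im_ne_zero φ hn (hty.resolve_right (not_not.2 rfl)) htrace
      (θ := θ) ?_ _
    rwa [QuadraticAlgebra.norm_zero, mul_zero, sub_zero] at hθ
  rcases eq_or_ne y.norm 0 with hy0 | hy0
  · exact (isQuadNorm_of_norm_eq_zero hn hy hy0 β).map φ
  · refine ⟨(QuadRing.map φ n t - algebraMap D _ θ) * QuadRing.map φ n (y.norm⁻¹ • star y), ?_⟩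
    rw [map_mul, hnorm, QuadRing.norm_map, QuadRing.norm_smul, QuadraticAlgebra.norm_star,
      mul_assoc, ← map_mul, sq, mul_assoc, mul_left_comm, inv_mul_cancel₀ hy0, mul_one,
      inv_mul_cancel₀ hy0, map_one, mul_one]

end RingHom

end Field

variable {k : Type*} [Field k] {m : k} {n β : QuadRing k m}

lemma exists_im_mul_ne_zero (hm : ∀ r : k, r ^ 2 ≠ -m + 1 * r) {z : QuadRing k m} (hz : z ≠ 0) :
    ∃ c, (z * c).im ≠ 0 := by
  have : Fact (∀ r : k, r ^ 2 ≠ -m + 1 * r) := ⟨hm⟩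
  refine ⟨z⁻¹ * ⟨0, 1⟩, ?_⟩
  rw [mul_inv_cancel_left₀ hz]
  exact one_ne_zero

lemma QuadRing.norm_smul_sub_smul {R : Type*} [CommRing R] {n : R} (a b : R) (z w : QuadRing R n) :
    (a • z - b • w).norm = a ^ 2 * z.norm - a * b * (z * star w).trace + b ^ 2 * w.norm := by
  simp [QuadRing.norm_eq, QuadraticAlgebra.trace_def]
  ring

lemma exists_sub_im_trace_ne_zero (hm : ∀ r : k, r ^ 2 ≠ -m + 1 * r) (hn : 1 - 4 * n ≠ 0)
    (hβ : β ≠ 0) {p : k} {y : QuadRing (QuadRing k m) n} (hpy : ¬(p = 0 ∧ y = 0)) :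
    ∃ v : QuadRing (QuadRing k m) n, p - (β * (y * star v).trace).im ≠ 0 := by
  rcases ne_or_eq p 0 with hp | rfl
  · refine ⟨0, ?_⟩
    rwa [star_zero, mul_zero, map_zero, mul_zero, QuadraticAlgebra.im_zero, sub_zero]
  have : Fact (∀ r : k, r ^ 2 ≠ -m + 1 * r) := ⟨hm⟩
  obtain ⟨v, hv⟩ := exists_trace_mul_ne_zero hn fun h => hpy ⟨rfl, h⟩
  obtain ⟨c, hc⟩ := exists_im_mul_ne_zero hm (mul_ne_zero hβ hv)
  refine ⟨star (c • v), ?_⟩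
  rw [star_star, mul_smul_comm, map_smul, smul_eq_mul, zero_sub, mul_comm c, ← mul_assoc]
  exact neg_ne_zero.2 hc

/- In characteristic two, reflect a zero with `s = 0` in a vector with `s = 1` that is not
orthogonal to it. -/
lemma exists_ne_zero_of_not_anisotropicOver_albertMatrix (hm : ∀ r : k, r ^ 2 ≠ -m + 1 * r)
    (hn : 1 - 4 * n ≠ 0) (hβ : β ≠ 0) (h2 : (2 : k) = 0)
    (h : ¬AnisotropicOver (albertMatrix n β) k) :
    ∃ (p s : k) (y : QuadRing (QuadRing k m) n), s ≠ 0 ∧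
      ((⟨⟨0, p⟩, ⟨s, -2 * p⟩⟩ : QuadRing (QuadRing k m) n).norm - β * y.norm).im = 0 := by
  obtain ⟨p, s, y, hne, hval⟩ := not_anisotropicOver_albertMatrix_iff.1 h
  rcases ne_or_eq s 0 with hs | rfl
  · exact ⟨p, s, y, hs, hval⟩
  obtain ⟨v, hv⟩ : ∃ v : QuadRing (QuadRing k m) n, p - (β * (y * star v).trace).im ≠ 0 :=
    exists_sub_im_trace_ne_zero hm hn hβ fun h => hne ⟨h.1, rfl, h.2⟩
  obtain ⟨b, hb⟩ : ∃ b, b = p - (β * (y * star v).trace).im := ⟨_, rfl⟩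
  obtain ⟨q, hq⟩ : ∃ q, q = (n - β * v.norm).im := ⟨_, rfl⟩
  refine ⟨q * p, -b, algebraMap k (QuadRing k m) q • y - algebraMap k (QuadRing k m) b • v,
    neg_ne_zero.2 (hb ▸ hv), ?_⟩
  have him : ∀ p s : k, (⟨⟨0, p⟩, ⟨s, -2 * p⟩⟩ : QuadRing (QuadRing k m) n).norm.im =
      p ^ 2 + p * s + n.im * s ^ 2 := fun p s => by
    simp [QuadRing.norm_eq, h2, sq]
  rw [QuadraticAlgebra.im_sub, him] at hval ⊢
  rw [QuadRing.norm_smul_sub_smul, ← map_pow, ← map_pow, ← map_mul]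
  subst hb hq
  simp only [QuadraticAlgebra.im_sub, QuadraticAlgebra.im_add, QuadraticAlgebra.re_sub,
    QuadraticAlgebra.re_add, QuadraticAlgebra.im_mul, QuadraticAlgebra.re_mul,
    QuadraticAlgebra.algebraMap_re, QuadraticAlgebra.algebraMap_im] at hval ⊢
  linear_combination (n.im - (β.re * v.norm.im + β.im * v.norm.re + 1 * β.im * v.norm.im)) ^ 2 *
    hval

lemma exists_trace_eq_one_of_trace_ne_zero {t y : QuadRing (QuadRing k m) n} {c ν : k} (hc : c ≠ 0)
    (hty : t.im ≠ 0 ∨ y ≠ 0) (htrace : t.trace = algebraMap k _ c)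
    (hnorm : t.norm - β * y.norm = algebraMap k _ ν) :
    ∃ (t y : QuadRing (QuadRing k m) n) (ν : k), (t.im ≠ 0 ∨ y ≠ 0) ∧ t.trace = 1 ∧
      t.norm - β * y.norm = algebraMap k _ ν := by
  refine ⟨algebraMap k (QuadRing k m) c⁻¹ • t, algebraMap k (QuadRing k m) c⁻¹ • y, c⁻¹ ^ 2 * ν,
    ?_, ?_, ?_⟩
  · rw [algebraMap_smul, algebraMap_smul, QuadraticAlgebra.im_smul]
    exact hty.imp (smul_ne_zero (inv_ne_zero hc)) (smul_ne_zero (inv_ne_zero hc))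
  · rw [map_smul, htrace, smul_eq_mul, ← map_mul, inv_mul_cancel₀ hc, map_one]
  · rw [QuadRing.norm_smul, QuadRing.norm_smul, map_mul, ← hnorm, map_pow]
    ring

/- In characteristic not two, the trace is adjusted by adding a scalar. -/
lemma exists_trace_eq_one_of_not_anisotropicOver_albertMatrix
    (hm : ∀ r : k, r ^ 2 ≠ -m + 1 * r) (hn : 1 - 4 * n ≠ 0) (hβ : β ≠ 0)
    (h : ¬AnisotropicOver (albertMatrix n β) k) :
    ∃ (t y : QuadRing (QuadRing k m) n) (ν : k), (t.im ≠ 0 ∨ y ≠ 0) ∧ t.trace = 1 ∧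
      t.norm - β * y.norm = algebraMap k _ ν := by
  have htrace : ∀ p s : k, (⟨⟨0, p⟩, ⟨s, -2 * p⟩⟩ : QuadRing (QuadRing k m) n).trace =
      algebraMap k _ s := fun p s => by
    ext <;> simp [QuadraticAlgebra.trace_def, QuadraticAlgebra.re_ofNat, QuadraticAlgebra.im_ofNat]
  rcases eq_or_ne (2 : k) 0 with h2 | h2
  · obtain ⟨p, s, y, hs, hval⟩ :=
      exists_ne_zero_of_not_anisotropicOver_albertMatrix hm hn hβ h2 h
    exact exists_trace_eq_one_of_trace_ne_zero hs
      (.inl fun h0 => hs (congrArg QuadraticAlgebra.re h0)) (htrace p s)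
      (QuadraticAlgebra.ext rfl hval)
  · obtain ⟨p, s, y, hne, hval⟩ := not_anisotropicOver_albertMatrix_iff.1 h
    obtain ⟨ν, hν⟩ : ∃ ν, (⟨⟨0, p⟩, ⟨s, -2 * p⟩⟩ : QuadRing (QuadRing k m) n).norm - β * y.norm =
      algebraMap k _ ν := ⟨_, QuadraticAlgebra.ext rfl hval⟩
    have ha : 2 * ((s - 1) / 2) = s - 1 := mul_div_cancel₀ _ h2
    refine ⟨⟨⟨0, p⟩, ⟨s, -2 * p⟩⟩ - algebraMap (QuadRing k m) _ (algebraMap k _ ((s - 1) / 2)), y,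
      ν - (s - 1) / 2 * s + ((s - 1) / 2) ^ 2, ?_, ?_, ?_⟩
    · by_contra! h0
      have h0' := h0.1
      simp only [neg_mul, QuadraticAlgebra.im_sub, QuadraticAlgebra.algebraMap_im, sub_zero,
        QuadraticAlgebra.ext_iff, QuadraticAlgebra.re_zero, QuadraticAlgebra.im_zero,
        neg_eq_zero, mul_eq_zero, h2, false_or] at h0'
      exact hne ⟨h0'.2, h0'.1, h0.2⟩
    · rw [map_sub, htrace, QuadraticAlgebra.trace_algebraMap, ← map_ofNat (algebraMap k _) 2,
        ← map_mul, ha, ← map_sub, sub_sub_cancel, map_one]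
    · rw [QuadRing.norm_sub_algebraMap, htrace, map_add, map_sub, ← hν, map_mul, map_pow]
      ring

theorem isNormOver_of_root (hm : ∀ r : k, r ^ 2 ≠ -m + 1 * r) (hn : 1 - 4 * n ≠ 0)
    {t y : QuadRing (QuadRing k m) n} {ν : k} (hty : t.im ≠ 0 ∨ y ≠ 0) (htrace : t.trace = 1)
    (hnorm : t.norm - β * y.norm = algebraMap k _ ν) {F : Type*} [CommRing F] [Algebra k F] {θ : F}
    (hθ : θ ^ 2 = θ - algebraMap k F ν) : IsNormOver n β F := by
  have : Fact (∀ r : k, r ^ 2 ≠ -m + 1 * r) := ⟨hm⟩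
  refine isQuadNorm_map_of_trace_eq_one _ hn hty htrace (θ := algebraMap F _ θ) ?_
  rw [hnorm, ← map_pow, hθ, map_sub]
  congr 1
  ext <;> simp

end Split

section Fields

section SepClosed

variable {Ω : Type*} [Field Ω] [IsSepClosed Ω]

lemma exists_sq_eq_sub_of_isSepClosed (c : Ω) : ∃ r, r ^ 2 = r - c := by
  rcases eq_or_ne (2 : Ω) 0 with h2 | h2
  · obtain ⟨r, hr⟩ := IsSepClosed.exists_root_C_mul_X_pow_add_C_mul_X_add_C (n := 2) 1 (-1) c
      (by rwa [Nat.cast_ofNat]) le_rfl (neg_ne_zero.2 one_ne_zero)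
    exact ⟨r, by linear_combination hr⟩
  · have : NeZero (2 : Ω) := ⟨h2⟩
    obtain ⟨z, hz⟩ := IsSepClosed.exists_eq_mul_self (1 - 4 * c)
    obtain ⟨r, hr⟩ : ∃ r, 2 * r = 1 + z := ⟨_, mul_div_cancel₀ _ h2⟩
    refine ⟨r, mul_left_cancel₀ (mul_ne_zero h2 h2) ?_⟩
    linear_combination (2 * r - 2 + 1 + z) * hr - hz

/- `Ω[ω]` is isomorphic to `Ω × Ω` by the two specializations of `ω`. -/
lemma exists_quadRing_sq_eq_sub_of_isSepClosed {m : Ω} (hm : 1 - 4 * m ≠ 0) (n : QuadRing Ω m) :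
    ∃ r, r ^ 2 = r - n := by
  obtain ⟨σ, hσ⟩ := exists_sq_eq_sub_of_isSepClosed m
  have hσ' : 2 * σ - 1 ≠ 0 := fun h => hm <| by linear_combination (2 * σ - 1) * h - 4 * hσ
  obtain ⟨u, hu⟩ := exists_sq_eq_sub_of_isSepClosed (n.re + σ * n.im)
  obtain ⟨v, hv⟩ := exists_sq_eq_sub_of_isSepClosed (n.re + (1 - σ) * n.im)
  obtain ⟨d, hd⟩ : ∃ d, (2 * σ - 1) * d = u - v := ⟨_, mul_div_cancel₀ _ hσ'⟩
  obtain ⟨c, rfl⟩ : ∃ c, u = c + σ * d := ⟨_, (sub_add_cancel u (σ * d)).symm⟩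
  obtain rfl : v = c + (1 - σ) * d := by linear_combination hd
  have him : 2 * c * d + d ^ 2 = d - n.im :=
    mul_left_cancel₀ hσ' <| by linear_combination hu - hv
  have hre : c ^ 2 - m * d ^ 2 = c - n.re := by
    linear_combination hu - σ * him - d ^ 2 * hσ
  refine ⟨⟨c, d⟩, ?_⟩
  ext
  · simp [sq]
    linear_combination hre
  · simp [sq]
    linear_combination him

end SepClosed

section Adjoin

variable {k E : Type*} [Field k] [Field E] [Algebra k E]

lemma toSubmodule_adjoin_le_of_mul_mem {s : Set E} {S : Submodule k E} (h1 : 1 ∈ S)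
    (hmul : ∀ a ∈ s, ∀ x ∈ S, a * x ∈ S) : (Algebra.adjoin k s).toSubmodule ≤ S := by
  suffices h : ∀ a ∈ Algebra.adjoin k s, ∀ x ∈ S, a * x ∈ S from
    fun a ha => mul_one a ▸ h a ha 1 h1
  intro a ha
  induction ha using Algebra.adjoin_induction with
  | mem a ha => exact hmul a ha
  | algebraMap c => exact fun x hx => Algebra.smul_def c x ▸ S.smul_mem c hx
  | add a b _ _ ha hb => exact fun x hx => add_mul a b x ▸ S.add_mem (ha x hx) (hb x hx)
  | mul a b _ _ ha hb => exact fun x hx => mul_assoc a b x ▸ ha _ (hb x hx)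

lemma finrank_adjoin_le_card_of_mul_mem_span [Algebra.IsAlgebraic k E] {s : Set E} {ι : Type*}
    [Fintype ι] (b : ι → E) (h1 : 1 ∈ Submodule.span k (Set.range b))
    (hmul : ∀ a ∈ s, ∀ i, a * b i ∈ Submodule.span k (Set.range b)) :
    Module.finrank k (IntermediateField.adjoin k s) ≤ Fintype.card ι := by
  have hle : (IntermediateField.adjoin k s).toSubalgebra.toSubmodule ≤
      Submodule.span k (Set.range b) := by
    rw [IntermediateField.adjoin_toSubalgebra]
    refine toSubmodule_adjoin_le_of_mul_mem h1 fun a ha x hx => ?_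
    induction hx using Submodule.span_induction with
    | mem x hx => exact hx.choose_spec ▸ hmul a ha _
    | zero => simp
    | add x y _ _ hx hy => exact mul_add a x y ▸ add_mem hx hy
    | smul c x _ hx => exact mul_smul_comm c a x ▸ Submodule.smul_mem _ c hx
  have := Module.Finite.span_of_finite k (Set.finite_range b)
  exact (Submodule.finrank_mono hle).trans (finrank_range_le_card b)

lemma finrank_adjoin_le_two [Algebra.IsAlgebraic k E] {ν : k} {θ : E}
    (hθ : θ ^ 2 = θ - algebraMap k E ν) :
    Module.finrank k (IntermediateField.adjoin k {θ}) ≤ 2 := by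
  refine finrank_adjoin_le_card_of_mul_mem_span ![1, θ] (Submodule.subset_span ⟨0, rfl⟩) ?_
  rintro _ rfl i
  rw [Submodule.mem_span_range_iff_exists_fun]
  refine ⟨![![0, 1], ![-ν, 1]] i, ?_⟩
  fin_cases i
  · simp
  · simp [Algebra.smul_def]
    linear_combination -hθ

lemma finrank_adjoin_re_im_le_four [Algebra.IsAlgebraic k E] {m : k} (hm : 1 - 4 * m ≠ 0)
    {n : QuadRing k m} {r : QuadRing E (algebraMap k E m)}
    (hr : r ^ 2 = r - QuadRing.map (algebraMap k E) m n) :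
    Module.finrank k (IntermediateField.adjoin k {r.re, r.im}) ≤ 4 := by
  obtain ⟨n₀, n₁⟩ := n
  obtain ⟨c, d⟩ := r
  obtain ⟨hc, hd⟩ := QuadraticAlgebra.ext_iff.1 hr
  simp only [sq, QuadraticAlgebra.mk_mul_mk, neg_mul, one_mul, QuadraticAlgebra.re_sub,
    QuadRing.re_map_apply, QuadraticAlgebra.im_sub, QuadRing.im_map_apply] at hc hd
  have hinv : algebraMap k E (1 - 4 * m)⁻¹ * (1 - 4 * algebraMap k E m) = 1 := by
    simpa only [map_mul, map_sub, map_one, map_ofNat] using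
      congrArg (algebraMap k E) (inv_mul_cancel₀ hm)
  obtain ⟨p, q, t, hccd⟩ : ∃ p q t : k, c * (c * d) =
      algebraMap k E p + algebraMap k E q * c + algebraMap k E t * d + c * d := by
    refine ⟨-((1 - 4 * m)⁻¹ * (m * n₁)), (1 - 4 * m)⁻¹ * (2 * m * n₁),
      (1 - 4 * m)⁻¹ * (m - m * n₁ - n₀), ?_⟩
    simp only [map_mul, map_sub, map_neg, map_ofNat]
    linear_combination algebraMap k E (1 - 4 * m)⁻¹ *
      (d * hc + algebraMap k E m * (d - 2 * c + 1) * hd) - c * d * (c - 1) * hinv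
  refine finrank_adjoin_le_card_of_mul_mem_span ![1, c, d, c * d]
    (Submodule.subset_span ⟨0, rfl⟩) ?_
  rintro _ (rfl | rfl) i <;> rw [Submodule.mem_span_range_iff_exists_fun]
  · refine ⟨![![0, 1, 0, 0], ![-n₀ - m * n₁, 1, m, -2 * m], ![0, 0, 0, 1], ![p, q, t, 1]] i, ?_⟩
    fin_cases i <;> simp [Fin.sum_univ_four, Algebra.smul_def, map_ofNat]
    · linear_combination -hc - algebraMap k E m * hd
    · linear_combination -hccd
  · refine ⟨![![0, 0, 1, 0], ![0, 0, 0, 1], ![-n₁, 0, 1, -2],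
      ![-2 * p, -n₁ - 2 * q, -2 * t, -1]] i, ?_⟩
    fin_cases i <;> simp [Fin.sum_univ_four, Algebra.smul_def, map_ofNat]
    · ring
    · linear_combination -hd
    · linear_combination -c * hd + 2 * hccd

end Adjoin

end Fields

section Sylow

lemma eq_one_of_two_pow_mul_mod_four {j y : ℕ} (hy : Odd y) (h : 2 ^ j * y % 4 = 2) : j = 1 := by
  match j with
  | 0 => obtain ⟨z, rfl⟩ := hy; omega
  | 1 => rfl
  | j + 2 => rw [pow_add, mul_assoc, mul_left_comm] at h; omega

lemma exists_le_odd_index_relIndex_eq_two {G : Type*} [Group G] [Finite G] (H : Subgroup G)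
    (hH : H.index % 4 = 2) :
    ∃ P Q : Subgroup G, Q ≤ H ∧ Q ≤ P ∧ Odd P.index ∧ Q.relIndex P = 2 := by
  have : Fact (Nat.Prime 2) := ⟨Nat.prime_two⟩
  obtain ⟨S⟩ : Nonempty (Sylow 2 H) := inferInstance
  obtain ⟨P, hQP⟩ := (S.isPGroup'.map H.subtype).exists_le_sylow
  have hQH : S.map H.subtype ≤ H := Subgroup.map_subtype_le _
  have hP : Odd (P : Subgroup G).index := by
    rw [← Nat.not_even_iff_odd, even_iff_two_dvd]
    exact P.not_dvd_index
  refine ⟨P, S.map H.subtype, hQH, hQP, hP, ?_⟩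
  have hindex : (S : Subgroup H).index * H.index =
      (S.map H.subtype).relIndex P * (P : Subgroup G).index := by
    rw [Subgroup.relIndex_mul_index hQP, ← Subgroup.relIndex_mul_index hQH, Subgroup.relIndex,
      Subgroup.subgroupOf, Subgroup.comap_map_eq_self_of_injective H.subtype_injective]
  have hmod : (S : Subgroup H).index * H.index % 4 = 2 := by
    have hS : ¬2 ∣ (S : Subgroup H).index := S.not_dvd_index
    obtain h | h : (S : Subgroup H).index % 4 = 1 ∨ (S : Subgroup H).index % 4 = 3 := by omega
    all_goals rw [Nat.mul_mod, h, hH]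
  obtain ⟨a, ha⟩ := P.isPGroup'.exists_card_eq
  obtain ⟨j, -, hj⟩ := (Nat.dvd_prime_pow Nat.prime_two).1
    (ha ▸ Subgroup.relIndex_dvd_card (S.map H.subtype) (P : Subgroup G))
  rw [hindex, hj] at hmod
  rw [hj, eq_one_of_two_pow_mul_mod_four hP hmod, pow_one]

lemma finrank_fixedField_eq_index {k N : Type*} [Field k] [Field N] [Algebra k N]
    [FiniteDimensional k N] [IsGalois k N] (H : Subgroup Gal(N/k)) :
    Module.finrank k (IntermediateField.fixedField H) = H.index := by
  rw [IntermediateField.finrank_eq_fixingSubgroup_index,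
    IntermediateField.fixingSubgroup_fixedField]

theorem exists_quadratic_over_odd_of_finrank_mod_four {k N : Type*} [Field k] [Field N]
    [Algebra k N] [FiniteDimensional k N] [IsGalois k N] (F : IntermediateField k N)
    (hF : Module.finrank k F % 4 = 2) :
    ∃ (M : IntermediateField k N) (E : IntermediateField M N),
      Odd (Module.finrank k M) ∧ Module.finrank M E = 2 ∧ F ≤ E.restrictScalars k := by
  rw [IntermediateField.finrank_eq_fixingSubgroup_index] at hF
  obtain ⟨P, Q, hQF, hQP, hP, hQ⟩ := exists_le_odd_index_relIndex_eq_two _ hF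
  have hle : IntermediateField.fixedField P ≤ IntermediateField.fixedField Q :=
    IntermediateField.fixedField_antitone hQP
  rw [← finrank_fixedField_eq_index] at hP
  refine ⟨IntermediateField.fixedField P, IntermediateField.extendScalars hle, hP, ?_,
    (IntermediateField.le_iff_le Q F).2 hQF⟩
  refine Nat.eq_of_mul_eq_mul_left hP.pos ?_
  rw [Module.finrank_mul_finrank]
  change Module.finrank k (IntermediateField.fixedField Q) = _
  rw [finrank_fixedField_eq_index, finrank_fixedField_eq_index,
    ← Subgroup.relIndex_mul_index hQP, hQ, mul_comm]

end Sylow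

section Main

variable {k : Type*} [Field k] {m : k} {n β : QuadRing k m}

lemma isNormOver_of_sq_eq_sub (hm : ∀ r : k, r ^ 2 ≠ -m + 1 * r) (hn : 1 - 4 * n ≠ 0) {R : Type*}
    [CommRing R] [Algebra k R] {r : QuadRing R (algebraMap k R m)}
    (hr : r ^ 2 = r - QuadRing.map (algebraMap k R) m n) : IsNormOver n β R := by
  have : Fact (∀ r : k, r ^ 2 ≠ -m + 1 * r) := ⟨hm⟩
  refine isQuadNorm_of_root ?_ hr _
  simpa only [map_sub, map_one, map_mul, map_ofNat] using
    hn.isUnit.map (QuadRing.map (algebraMap k R) m)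

lemma two_dvd_finrank (hm : ∀ r : k, r ^ 2 ≠ -m + 1 * r) (hn : 1 - 4 * n ≠ 0)
    (hβ : ¬IsQuadNorm n β) {F : Type*} [Field F] [Algebra k F] (h : IsNormOver n β F) :
    2 ∣ Module.finrank k F := by
  rw [← even_iff_two_dvd, ← Nat.not_odd_iff_even]
  exact fun hodd => hβ (IsNormOver.of_odd_finrank F hm hn hodd h)

theorem four_dvd_finrank (hm : ∀ r : k, r ^ 2 ≠ -m + 1 * r) (hn : 1 - 4 * n ≠ 0)
    (hβ : ¬IsQuadNorm n β) (haniso : AnisotropicOver (albertMatrix n β) k) {F : Type*} [Field F]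
    [Algebra k F] [FiniteDimensional k F] [Algebra.IsSeparable k F] (h : IsNormOver n β F) :
    4 ∣ Module.finrank k F := by
  have htwo := two_dvd_finrank hm hn hβ h
  suffices Module.finrank k F % 4 ≠ 2 by omega
  intro hmod
  let φ : F →ₐ[k] SeparableClosure k := IsSepClosed.lift
  let : Algebra F (SeparableClosure k) := φ.toAlgebra
  have : IsScalarTower k F (SeparableClosure k) := .of_algebraMap_eq fun x => (φ.commutes x).symm
  let ι : F →ₐ[k] IntermediateField.normalClosure k F (SeparableClosure k) :=
    IsScalarTower.toAlgHom k F _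
  rw [(AlgEquiv.ofInjectiveField ι).toLinearEquiv.finrank_eq] at hmod
  obtain ⟨M, E, hM, hE, hFE⟩ := exists_quadratic_over_odd_of_finrank_mod_four ι.fieldRange hmod
  refine IsNormOver.not_anisotropicOver_albertMatrix M hm hn hM hE hβ ?_ haniso
  exact h.map ((IntermediateField.inclusion hFE).comp ι.rangeRestrict)

lemma exists_isNormOver_finrank_dvd_two (hm : ∀ r : k, r ^ 2 ≠ -m + 1 * r) (hn : 1 - 4 * n ≠ 0)
    (hβ : β ≠ 0) (h : ¬AnisotropicOver (albertMatrix n β) k) :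
    ∃ F : IntermediateField k (SeparableClosure k), FiniteDimensional k F ∧ IsNormOver n β F ∧
      Module.finrank k F ∣ 2 := by
  obtain ⟨t, y, ν, hty, htrace, hnorm⟩ :=
    exists_trace_eq_one_of_not_anisotropicOver_albertMatrix hm hn hβ h
  obtain ⟨θ, hθ⟩ := exists_sq_eq_sub_of_isSepClosed (algebraMap k (SeparableClosure k) ν)
  have : FiniteDimensional k (IntermediateField.adjoin k {θ}) :=
    IntermediateField.adjoin.finiteDimensional (Algebra.IsIntegral.isIntegral θ)
  refine ⟨IntermediateField.adjoin k {θ}, this, isNormOver_of_root hm hn hty htrace hnorm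
    (θ := IntermediateField.AdjoinSimple.gen k θ) (Subtype.ext hθ), ?_⟩
  have hpos : 0 < Module.finrank k (IntermediateField.adjoin k {θ}) := Module.finrank_pos
  have hle := finrank_adjoin_le_two hθ
  interval_cases Module.finrank k (IntermediateField.adjoin k {θ}) <;> decide

lemma exists_isNormOver_finrank_dvd_four (hm : ∀ r : k, r ^ 2 ≠ -m + 1 * r) (hn : 1 - 4 * n ≠ 0)
    (hβ : ¬IsQuadNorm n β) :
    ∃ F : IntermediateField k (SeparableClosure k), FiniteDimensional k F ∧ IsNormOver n β F ∧
      Module.finrank k F ∣ 4 := by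
  have hm' : 1 - 4 * m ≠ 0 := fun h => hm (2 * m) (by linear_combination -m * h)
  obtain ⟨r, hr⟩ := exists_quadRing_sq_eq_sub_of_isSepClosed
    (m := algebraMap k (SeparableClosure k) m)
    (by simpa only [map_sub, map_one, map_mul, map_ofNat] using
      (map_ne_zero (algebraMap k (SeparableClosure k))).2 hm')
    (QuadRing.map (algebraMap k (SeparableClosure k)) m n)
  let F := IntermediateField.adjoin k {r.re, r.im}
  have : FiniteDimensional k F :=
    IntermediateField.finiteDimensional_adjoin fun x _ => Algebra.IsIntegral.isIntegral x
  have hre : r.re ∈ F := IntermediateField.subset_adjoin _ _ (Set.mem_insert _ _)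
  have him : r.im ∈ F := IntermediateField.subset_adjoin _ _ (Set.mem_insert_of_mem _ rfl)
  have hF : IsNormOver n β F := by
    refine isNormOver_of_sq_eq_sub hm hn (r := ⟨⟨r.re, hre⟩, ⟨r.im, him⟩⟩) ?_
    obtain ⟨hr₁, hr₂⟩ := QuadraticAlgebra.ext_iff.1 hr
    simp only [sq] at hr₁ hr₂ ⊢
    exact QuadraticAlgebra.ext (Subtype.ext <| by simpa using hr₁)
      (Subtype.ext <| by simpa using hr₂)
  refine ⟨F, this, hF, ?_⟩
  obtain ⟨d, hd⟩ := two_dvd_finrank hm hn hβ hF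
  have hpos : 0 < Module.finrank k F := Module.finrank_pos
  have hle : Module.finrank k F ≤ 4 := finrank_adjoin_re_im_le_four hm' hr
  obtain rfl | rfl : d = 1 ∨ d = 2 := by omega
  all_goals norm_num [hd]

theorem exists_isNormOver_forall_finrank_dvd (hm : ∀ r : k, r ^ 2 ≠ -m + 1 * r)
    (hn : 1 - 4 * n ≠ 0) (β : QuadRing k m) :
    ∃ F : IntermediateField k (SeparableClosure k), FiniteDimensional k F ∧ IsNormOver n β F ∧
      ∀ (F' : Type*) [Field F'] [Algebra k F'] [FiniteDimensional k F'] [Algebra.IsSeparable k F'],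
        IsNormOver n β F' → Module.finrank k F ∣ Module.finrank k F' := by
  by_cases hβ : IsQuadNorm n β
  · refine ⟨⊥, inferInstance, (isNormOver_self_iff.2 hβ).map (Algebra.ofId k _), ?_⟩
    simp
  by_cases haniso : AnisotropicOver (albertMatrix n β) k
  · obtain ⟨F, hfin, hF, hdvd⟩ := exists_isNormOver_finrank_dvd_four hm hn hβ
    exact ⟨F, hfin, hF, fun F' _ _ _ _ h => hdvd.trans (four_dvd_finrank hm hn hβ haniso h)⟩
  · have hβ' : β ≠ 0 := fun h => hβ ⟨0, by rw [h, QuadraticAlgebra.norm_zero]⟩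
    obtain ⟨F, hfin, hF, hdvd⟩ := exists_isNormOver_finrank_dvd_two hm hn hβ' haniso
    exact ⟨F, hfin, hF, fun F' _ _ _ _ h => hdvd.trans (two_dvd_finrank hm hn hβ h)⟩

end Main

theorem stmt0_general (k K L : Type) [Field k] [Field K] [Field L]
    [Algebra k K] [Algebra k L] [Algebra K L] [IsScalarTower k K L]
    [Algebra.IsSeparable k L]
    (hKk : Module.finrank k K = 2) (hLK : Module.finrank K L = 2) (β : Kˣ) :
    ∃ (F : Type) (_ : Field F) (_ : Algebra k F),
      FiniteDimensional k F ∧ Algebra.IsSeparable k F ∧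
      IsNormFrom k K L F (β : K) ∧
      ∀ (F' : Type) (_ : Field F') (_ : Algebra k F'),
        FiniteDimensional k F' → Algebra.IsSeparable k F' →
        IsNormFrom k K L F' (β : K) →
        Module.finrank k F ∣ Module.finrank k F' := by
  have : Algebra.IsSeparable k K := Algebra.isSeparable_tower_bot_of_isSeparable k K L
  have : Algebra.IsSeparable K L := Algebra.isSeparable_tower_top_of_isSeparable k K L
  obtain ⟨m, ⟨e⟩⟩ := exists_quadRing_algEquiv hKk
  obtain ⟨n', ⟨e'⟩⟩ := exists_quadRing_algEquiv hLK
  obtain ⟨n, rfl⟩ := e.surjective n'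
  obtain ⟨β', hβ'⟩ := e.surjective β
  have hn : 1 - 4 * n ≠ 0 := fun h => one_sub_four_mul_ne_zero_of_algEquiv e' <| by
    simpa only [map_sub, map_one, map_mul, map_ofNat, map_zero] using congrArg e h
  have hβ : β' ≠ 0 := fun h => β.ne_zero <| by rw [← hβ', h, map_zero]
  obtain ⟨F, hfin, hF, hdvd⟩ := exists_isNormOver_forall_finrank_dvd (sq_ne_of_algEquiv e) hn β'
  simp only [← hβ', isNormFrom_iff_isNormOver e e' hβ]
  exact ⟨F, inferInstance, inferInstance, hfin, inferInstance, hF, fun F' _ _ _ _ => hdvd F'⟩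

theorem stmt0 (k K L : Type) [Field k] [Field K] [Field L]
    [Algebra k K] [Algebra k L] [Algebra K L] [IsScalarTower k K L]
    [Algebra.IsSeparable k L]
    (hKk : Module.finrank k K = 2) (hLK : Module.finrank K L = 2)
    (huniq : ∀ M : IntermediateField k L,
      M = ⊥ ∨ M = ⊤ ∨ M = (IsScalarTower.toAlgHom k K L).fieldRange)
    (β : Kˣ) :
    ∃ (F : Type) (_ : Field F) (_ : Algebra k F),
      FiniteDimensional k F ∧ Algebra.IsSeparable k F ∧
      IsNormFrom k K L F (β : K) ∧
      ∀ (F' : Type) (_ : Field F') (_ : Algebra k F'),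
        FiniteDimensional k F' → Algebra.IsSeparable k F' →
        IsNormFrom k K L F' (β : K) →
        Module.finrank k F ∣ Module.finrank k F' :=
  stmt0_general k K L hKk hLK β
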